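/- Let p/q be an irreducible fraction with 0 < p < q, p even and q odd, let (x/r, y/s) be its pair of parents, and write p/q = [0, a1, …, an] with n even and a1, …, an positive integers. Then x and y are both odd; moreover N0(a1, …, an) is even if and only if s is even, and N0(a1, …, an) is odd if and only if r is even. -/

import Mathlib

/-- `cf [a₀, a₁, …, aₙ]` is the continued fraction
`a₀ + 1/(a₁ + 1/(a₂ + ⋯ + 1/aₙ))`. -/
def cf : List ℕ → ℚ
  | [] => 0
  | [a] => (a : ℚ)
  | a :: t => (a : ℚ) + 1 / cf t

/-- `(x/r, y/s)` is the pair of parents of `α`: they are Farey neighbors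
(`x, y ≥ 0`, `r, s ≥ 1`, `r*y - x*s = 1`) and `α` is their Farey mediant. -/
def IsParents (x r y s : ℕ) (α : ℚ) : Prop :=
  1 ≤ r ∧ 1 ≤ s ∧ r * y = x * s + 1 ∧
    α = ((x : ℚ) + (y : ℚ)) / ((r : ℚ) + (s : ℚ))

/-- `N₀(a₁, …, aₙ)`: the number of even integers among `a₁, …, aₙ`. -/
def N0 (l : List ℕ) : ℕ := (l.filter (fun a => a % 2 = 0)).length

/-!
The product `M` of the matrices `!![0, 1; 1, aᵢ]` has determinant `(-1) ^ n = 1`, and its second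
column `(p, q)` holds the reduced numerator and denominator of `[0, a₁, …, aₙ]`. The matrix
`!![y, x + y; s, r + s]` built from the parents has the same determinant and the same second column,
and the size of the bottom left entries forces the two matrices to coincide. Modulo 2 these matrices
live in `SL₂(𝔽₂) ≅ S₃`, where `!![0, 1; 1, a]` is a transposition for even `a` and a 3-cycle for
odd `a`, so the parity of `N0` is the sign of `M` mod 2, which is the parity of `s` when `p` is even
and `q` is odd.
-/

/-- The product of the matrices `!![0, 1; 1, aᵢ]`. Its second column consists of the numerator and
the denominator of the continued fraction `[0, a₁, …, aₙ]`, its first column of those of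
`[0, a₁, …, aₙ₋₁]`. -/
def cfMatrix (R : Type*) [Semiring R] (l : List ℕ) : Matrix (Fin 2) (Fin 2) R :=
  (l.map fun a : ℕ => !![0, 1; 1, (a : R)]).prod

section Semiring

variable {R S : Type*} [Semiring R] [Semiring S]

lemma cfMatrix_nil : cfMatrix R [] = 1 := rfl

lemma cfMatrix_cons (a : ℕ) (l : List ℕ) :
    cfMatrix R (a :: l) = !![0, 1; 1, (a : R)] * cfMatrix R l := rfl

lemma cfMatrix_cons_zero (a : ℕ) (l : List ℕ) (j : Fin 2) :
    cfMatrix R (a :: l) 0 j = cfMatrix R l 1 j := by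
  simp [cfMatrix_cons, Matrix.mul_apply]

lemma cfMatrix_cons_one (a : ℕ) (l : List ℕ) (j : Fin 2) :
    cfMatrix R (a :: l) 1 j = cfMatrix R l 0 j + a * cfMatrix R l 1 j := by
  simp [cfMatrix_cons, Matrix.mul_apply]

lemma mapMatrix_cfMatrix (f : R →+* S) (l : List ℕ) :
    f.mapMatrix (cfMatrix R l) = cfMatrix S l := by
  rw [cfMatrix, map_list_prod, List.map_map, cfMatrix]
  congr 2
  ext a i j
  fin_cases i <;> fin_cases j <;> simp

end Semiring

lemma det_cfMatrix {R : Type*} [CommRing R] (l : List ℕ) :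
    (cfMatrix R l).det = (-1) ^ l.length := by
  induction l with
  | nil => simp [cfMatrix_nil]
  | cons a l ih =>
    rw [cfMatrix_cons, Matrix.det_mul, ih, Matrix.det_fin_two_of, List.length_cons, pow_succ']
    ring

section Order

variable {R : Type*} [Semiring R] [PartialOrder R] [IsOrderedRing R] {l : List ℕ}

lemma cfMatrix_nonneg (l : List ℕ) (i j : Fin 2) : 0 ≤ cfMatrix R l i j := by
  induction l generalizing i with
  | nil => fin_cases i <;> fin_cases j <;> simp [cfMatrix_nil]
  | cons a l ih =>
    fin_cases i
    · simpa [cfMatrix_cons_zero] using ih 1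
    · simpa [cfMatrix_cons_one] using add_nonneg (ih 0) (mul_nonneg a.cast_nonneg (ih 1))

/- The first inequality is there for the induction. Comparing the top rows alone would not do, as
the empty list has top row `(1, 0)`. -/
lemma cfMatrix_add_le_and_one_zero_le (hl : ∀ a ∈ l, 0 < a) :
    cfMatrix R l 0 0 + cfMatrix R l 1 0 ≤ cfMatrix R l 0 1 + cfMatrix R l 1 1 ∧
      cfMatrix R l 1 0 ≤ cfMatrix R l 1 1 := by
  induction l with
  | nil => simp [cfMatrix_nil]
  | cons a l ih =>
    rw [List.forall_mem_cons] at hl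
    obtain ⟨hsum, hbot⟩ := ih hl.2
    obtain ⟨b, rfl⟩ : ∃ b, a = b + 1 := Nat.exists_eq_add_one.2 hl.1
    have hbot' : cfMatrix R ((b + 1) :: l) 1 0 ≤ cfMatrix R ((b + 1) :: l) 1 1 := by
      calc cfMatrix R ((b + 1) :: l) 1 0
          = (cfMatrix R l 0 0 + cfMatrix R l 1 0) + b * cfMatrix R l 1 0 := by
            rw [cfMatrix_cons_one, Nat.cast_succ, add_one_mul]; abel
        _ ≤ (cfMatrix R l 0 1 + cfMatrix R l 1 1) + b * cfMatrix R l 1 1 := by gcongr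
        _ = cfMatrix R ((b + 1) :: l) 1 1 := by
            rw [cfMatrix_cons_one, Nat.cast_succ, add_one_mul]; abel
    refine ⟨?_, hbot'⟩
    rw [cfMatrix_cons_zero, cfMatrix_cons_zero]
    exact add_le_add hbot hbot'

end Order

lemma cfMatrix_one_one_pos {R : Type*} [Semiring R] [PartialOrder R] [IsStrictOrderedRing R]
    {l : List ℕ} (hl : ∀ a ∈ l, 0 < a) : 0 < cfMatrix R l 1 1 := by
  induction l with
  | nil => simp [cfMatrix_nil]
  | cons a l ih =>
    rw [List.forall_mem_cons] at hl
    rw [cfMatrix_cons_one]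
    exact add_pos_of_nonneg_of_pos (cfMatrix_nonneg l 0 1)
      (mul_pos (Nat.cast_pos.2 hl.1) (ih hl.2))

lemma cf_cons_eq_add_div (a : ℕ) {l : List ℕ} (hl : ∀ b ∈ l, 0 < b) :
    cf (a :: l) = a + cfMatrix ℚ l 0 1 / cfMatrix ℚ l 1 1 := by
  induction l generalizing a with
  | nil => simp [cf, cfMatrix_nil]
  | cons b l ih =>
    rw [List.forall_mem_cons] at hl
    have hden : cfMatrix ℚ l 1 1 ≠ 0 := (cfMatrix_one_one_pos hl.2).ne'
    calc cf (a :: b :: l) = a + 1 / (b + cfMatrix ℚ l 0 1 / cfMatrix ℚ l 1 1) := by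
          rw [← ih b hl.2, cf]; simp
      _ = a + cfMatrix ℚ (b :: l) 0 1 / cfMatrix ℚ (b :: l) 1 1 := by
          rw [cfMatrix_cons_zero, cfMatrix_cons_one, add_div' _ _ _ hden, one_div_div,
            add_comm (_ * _)]

lemma cf_zero_cons_eq_div {l : List ℕ} (hl : ∀ a ∈ l, 0 < a) :
    cf (0 :: l) = (cfMatrix ℤ l 0 1 : ℚ) / (cfMatrix ℤ l 1 1 : ℚ) := by
  simp [cf_cons_eq_add_div 0 hl, ← mapMatrix_cfMatrix (Int.castRingHom ℚ)]

/-- The sign of an element of `SL₂(𝔽₂) ≅ S₃`, written additively: it is `1` exactly on the three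
transpositions `!![0, 1; 1, 0]`, `!![1, 1; 0, 1]` and `!![1, 0; 1, 1]`. The value is meaningful only
for invertible matrices. -/
def signParity (M : Matrix (Fin 2) (Fin 2) (ZMod 2)) : ZMod 2 :=
  (1 + M 0 0) * (1 + M 1 1) + M 0 1 + M 1 0

lemma signParity_mul {M N : Matrix (Fin 2) (Fin 2) (ZMod 2)} (hM : M.det = 1) (hN : N.det = 1) :
    signParity (M * N) = signParity M + signParity N := by
  simp only [signParity, Matrix.mul_apply, Fin.sum_univ_two]
  rw [Matrix.det_fin_two] at hM hN
  generalize M 0 0 = a, M 0 1 = b, M 1 0 = c, M 1 1 = d at *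
  generalize N 0 0 = a', N 0 1 = b', N 1 0 = c', N 1 1 = d' at *
  decide +revert

lemma natCast_N0_cons (a : ℕ) (l : List ℕ) : (N0 (a :: l) : ZMod 2) = (1 + a) + N0 l := by
  rcases Nat.even_or_odd a with ha | ha
  · have ha' : (a : ZMod 2) = 0 := ZMod.natCast_eq_zero_iff_even.2 ha
    simp [N0, Nat.even_iff.1 ha, ha', add_comm]
  · have ha' : (a : ZMod 2) = 1 := ZMod.natCast_eq_one_iff_odd.2 ha
    simp [N0, Nat.odd_iff.1 ha, ha', CharTwo.add_self_eq_zero]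

lemma natCast_N0_eq_signParity_cfMatrix (l : List ℕ) :
    (N0 l : ZMod 2) = signParity (cfMatrix (ZMod 2) l) := by
  induction l with
  | nil => decide
  | cons a l ih =>
    have hgen : signParity !![0, 1; 1, (a : ZMod 2)] = 1 + a := by
      simp [signParity, add_assoc, CharTwo.add_self_eq_zero]
    have hdet : (cfMatrix (ZMod 2) l).det = 1 := by
      simp [det_cfMatrix, CharTwo.neg_eq]
    rw [natCast_N0_cons, ih, cfMatrix_cons, signParity_mul (by simp) hdet, hgen]

lemma isCoprime_col_one_of_det_eq_one {R : Type*} [CommRing R] {M : Matrix (Fin 2) (Fin 2) R}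
    (hM : M.det = 1) : IsCoprime (M 0 1) (M 1 1) :=
  ⟨-M 1 0, M 0 0, by rw [← hM, Matrix.det_fin_two]; ring⟩

lemma eq_of_det_eq_one_of_col_one_eq {M N : Matrix (Fin 2) (Fin 2) ℤ} (hM : M.det = 1)
    (hN : N.det = 1) (hcol : ∀ i, M i 1 = N i 1) (hlt : |M 1 0 - N 1 0| < N 1 1) : M = N := by
  have hcop : IsCoprime (N 1 1) (N 0 1) := (isCoprime_col_one_of_det_eq_one hN).symm
  rw [Matrix.det_fin_two] at hM hN
  rw [hcol 0, hcol 1] at hM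
  have hcross : N 1 1 * (M 0 0 - N 0 0) = N 0 1 * (M 1 0 - N 1 0) := by linarith
  have hbot : M 1 0 - N 1 0 = 0 :=
    Int.eq_zero_of_abs_lt_dvd (hcop.dvd_of_dvd_mul_left ⟨_, hcross.symm⟩) hlt
  have htop : M 0 0 - N 0 0 = 0 := by
    have hden : N 1 1 ≠ 0 := ((abs_nonneg _).trans_lt hlt).ne'
    simpa [hbot, hden] using hcross
  ext i j
  fin_cases j
  · fin_cases i
    · exact sub_eq_zero.1 htop
    · exact sub_eq_zero.1 hbot
  · exact hcol i

namespace IsParents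

variable {x r y s : ℕ}

lemma det_eq_one {α : ℚ} (h : IsParents x r y s α) :
    (!![(y : ℤ), x + y; s, r + s]).det = 1 := by
  have hdet : (r : ℤ) * y = x * s + 1 := mod_cast h.2.2.1
  rw [Matrix.det_fin_two_of]
  linarith

lemma cfMatrix_eq {l : List ℕ} (h : IsParents x r y s (cf (0 :: l))) (hlen : Even l.length)
    (hl : ∀ a ∈ l, 0 < a) : cfMatrix ℤ l = !![(y : ℤ), x + y; s, r + s] := by
  have hdet : (cfMatrix ℤ l).det = 1 := by rw [det_cfMatrix, hlen.neg_one_pow]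
  have hden : 0 < cfMatrix ℤ l 1 1 := cfMatrix_one_one_pos hl
  have hle : cfMatrix ℤ l 1 0 ≤ cfMatrix ℤ l 1 1 := (cfMatrix_add_le_and_one_zero_le hl).2
  have hnonneg : 0 ≤ cfMatrix ℤ l 1 0 := cfMatrix_nonneg l 1 0
  have hdet_parents : (!![(y : ℤ), x + y; s, r + s]).det = 1 := h.det_eq_one
  obtain ⟨hr, hs, -, hmediant⟩ := h
  obtain ⟨hnum, hden_eq⟩ : cfMatrix ℤ l 0 1 = x + y ∧ cfMatrix ℤ l 1 1 = r + s := by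
    refine Rat.div_int_inj hden (by lia)
      (Int.isCoprime_iff_gcd_eq_one.1 (isCoprime_col_one_of_det_eq_one hdet))
      (Int.isCoprime_iff_gcd_eq_one.1 (isCoprime_col_one_of_det_eq_one hdet_parents)) ?_
    rw [← cf_zero_cons_eq_div hl, hmediant]
    push_cast
    rfl
  refine eq_of_det_eq_one_of_col_one_eq hdet hdet_parents
    (Fin.forall_fin_two.2 ⟨hnum, hden_eq⟩) ?_
  change |cfMatrix ℤ l 1 0 - s| < r + s
  rw [abs_lt]
  constructor <;> lia

lemma natCast_N0_eq {l : List ℕ} (h : IsParents x r y s (cf (0 :: l))) (hlen : Even l.length)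
    (hl : ∀ a ∈ l, 0 < a) :
    (N0 l : ZMod 2) = (1 + y) * (1 + (r + s)) + (x + y) + s := by
  rw [natCast_N0_eq_signParity_cfMatrix, ← mapMatrix_cfMatrix (Int.castRingHom (ZMod 2)),
    h.cfMatrix_eq hlen hl]
  simp [signParity]

lemma odd_of_even_div_odd {p q : ℕ} (h : IsParents x r y s ((p : ℚ) / q)) (hp : Even p)
    (hq : Odd q) : Odd x ∧ Odd y ∧ Odd (r + s) := by
  obtain ⟨hr, -, hdet, hmediant⟩ := h
  have hcross : p * (r + s) = (x + y) * q := by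
    have hq0 : (q : ℚ) ≠ 0 := mod_cast hq.pos.ne'
    have hrs : (r + s : ℚ) ≠ 0 := mod_cast (Nat.add_pos_left hr s).ne'
    exact mod_cast (div_eq_div_iff hq0 hrs).1 hmediant
  have hxy : Even (x + y) := by
    have hprod : Even ((x + y) * q) := hcross ▸ hp.mul_right _
    exact (Nat.even_mul.1 hprod).resolve_right (Nat.not_even_iff_odd.2 hq)
  have hodd : Odd (r * y + x * s) := ⟨x * s, by rw [hdet]; ring⟩
  grind

end IsParents

theorem N0_parity_of_zero_one_type_general (p q : ℕ) (hpeven : Even p) (hqodd : Odd q)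
    (x r y s : ℕ) (hpar : IsParents x r y s ((p : ℚ) / (q : ℚ)))
    (l : List ℕ) (hlen : Even l.length) (hpos : ∀ a ∈ l, 0 < a)
    (hcf : cf (0 :: l) = (p : ℚ) / (q : ℚ)) :
    Odd x ∧ Odd y ∧ (Even (N0 l) ↔ Even s) ∧ (Odd (N0 l) ↔ Even r) := by
  obtain ⟨hx, hy, hrs⟩ := hpar.odd_of_even_div_odd hpeven hqodd
  have hN0_eq_s : (N0 l : ZMod 2) = s := by
    have hpar_cf : IsParents x r y s (cf (0 :: l)) := hcf ▸ hpar
    have hxy_zero : (x + y : ZMod 2) = 0 := mod_cast (hx.add_odd hy).natCast_zmod_two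
    have hrs_one : (r + s : ZMod 2) = 1 := mod_cast hrs.natCast_zmod_two
    rw [hpar_cf.natCast_N0_eq hlen hpos, hxy_zero, hrs_one, CharTwo.add_self_eq_zero, mul_zero,
      add_zero, zero_add]
  have hN0_even : Even (N0 l) ↔ Even s := by
    rw [← ZMod.natCast_eq_zero_iff_even, hN0_eq_s, ZMod.natCast_eq_zero_iff_even]
  refine ⟨hx, hy, hN0_even, ?_⟩
  rw [← Nat.not_even_iff_odd, hN0_even, Nat.not_even_iff_odd, Nat.odd_add'.1 hrs]

/-- let `p/q` be irreducible with `0 < p < q`, `p` even, `q` odd, with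
pair of parents `(x/r, y/s)`, and let `p/q = [0, a₁, …, aₙ]` with `n` even and all
`aᵢ` positive.  Then `x, y` are both odd; moreover `N₀(a₁, …, aₙ)` is even iff `s`
is even, and `N₀(a₁, …, aₙ)` is odd iff `r` is even. -/
theorem N0_parity_of_zero_one_type (p q : ℕ) (hp : 0 < p) (hpq : p < q)
    (hcop : Nat.Coprime p q) (hpeven : Even p) (hqodd : Odd q)
    (x r y s : ℕ) (hpar : IsParents x r y s ((p : ℚ) / (q : ℚ)))
    (l : List ℕ) (hlen : Even l.length) (hpos : ∀ a ∈ l, 0 < a)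
    (hcf : cf (0 :: l) = (p : ℚ) / (q : ℚ)) :
    Odd x ∧ Odd y ∧ (Even (N0 l) ↔ Even s) ∧ (Odd (N0 l) ↔ Even r) :=
  N0_parity_of_zero_one_type_general p q hpeven hqodd x r y s hpar l hlen hpos hcf
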